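/- arXiv:1911.10577 — 2 statements merged into one kernel-verified Lean document; each statement's English description precedes it below -/
import Mathlib

section
/- Let R ⊂ S be an integral FCP ring extension and let T ∈ [R,S] be the t-closure of R in S (i.e., R ⊆ T is infra-integral and T ⊆ S is t-closed). For any maximal chain 𝒞 of [R,S] from R to S, there exists a maximal chain 𝒞′ of [R,S] from R to S containing T such that the length of 𝒞′ is greater than or equal to the length of 𝒞. -/
/-- A maximal chain of length `n` from `T` to `U`: each step is a covering. -/
def IsMaxChainFromTo {α : Type*} [PartialOrder α] (T U : α) (n : ℕ)
    (c : Fin (n + 1) → α) : Prop :=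
  c 0 = T ∧ c (Fin.last n) = U ∧ ∀ i : Fin n, c i.castSucc ⋖ c i.succ

/-- The subextension determined by `T ≤ U` is catenarian: all maximal chains from
`T` to `U` have the same length. -/
def IsCatenarianFromTo {α : Type*} [PartialOrder α] (T U : α) : Prop :=
  ∀ (n m : ℕ) (c : Fin (n + 1) → α) (d : Fin (m + 1) → α),
    IsMaxChainFromTo T U n c → IsMaxChainFromTo T U m d → n = m

/-- The extension `R ⊆ S` has FCP: every chain of `R`-subalgebras of `S` is finite. -/
def IsFCPExt (R S : Type*) [CommRing R] [CommRing S] [Algebra R S] : Prop :=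
  ∀ C : Set (Subalgebra R S), IsChain (· ≤ ·) C → C.Finite

/-- The extension `R ⊆ S` is catenarian. -/
def IsCatenarianExt (R S : Type*) [CommRing R] [CommRing S] [Algebra R S] : Prop :=
  IsCatenarianFromTo (⊥ : Subalgebra R S) ⊤

/-- The length `ℓ[T,U]`: the supremum of lengths of chains from `T` to `U`. -/
noncomputable def extLength {α : Type*} [PartialOrder α] (T U : α) : ℕ :=
  sSup {n | ∃ c : Fin (n + 1) → α, StrictMono c ∧ c 0 = T ∧ c (Fin.last n) = U}

/-- The residual extension `κ_R(P) → κ_S(Q)` (for `P = Q ∩ R`) is an isomorphism. -/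
def ResidualExtIsIso {R S : Type*} [CommRing R] [CommRing S] (f : R →+* S)
    (Q : Ideal S) [Q.IsPrime] : Prop :=
  Function.Bijective
    (IsLocalRing.ResidueField.map
      (Localization.localRingHom (Q.comap f) Q f rfl))

/-- `R ⊆ S` is infra-integral: it is integral and all residual extensions
are isomorphisms. -/
def IsInfraIntegral (R S : Type*) [CommRing R] [CommRing S] [Algebra R S] : Prop :=
  Algebra.IsIntegral R S ∧
    ∀ (Q : Ideal S) (_ : Q.IsPrime), ResidualExtIsIso (algebraMap R S) Q

/-- The subextension `T ⊆ S` is t-closed. -/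
def IsTClosedIn {R S : Type*} [CommRing R] [CommRing S] [Algebra R S]
    (T : Subalgebra R S) : Prop :=
  ∀ (b : S), ∀ r ∈ T, b ^ 2 - r * b ∈ T → b ^ 3 - r * b ^ 2 ∈ T → b ∈ T

/-- `T` is the t-closure of `R` in `S`: `R ⊆ T` is infra-integral and `T ⊆ S`
is t-closed. -/
def IsTClosure {R S : Type*} [CommRing R] [CommRing S] [Algebra R S]
    (T : Subalgebra R S) : Prop :=
  IsInfraIntegral R T ∧ IsTClosedIn T

/-!
Everything rests on the map `A ↦ (A ⊓ T, A ⊔ T)` being strictly monotone on `[R, S]`: each step of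
a chain `𝒞` from `R` to `S` then survives in `𝒞 ⊓ T` or in `𝒞 ⊔ T`, so these two chains, refined
and concatenated, form a maximal chain through `T` at least as long as `𝒞`.

Suppose `A < B` have the same value under this map, and let `A ⋖ D ≤ B`. Then `A ⊇ T ⊓ D`, which is
t-closed in `D`. Being t-closed passes to larger rings, and if `A` is t-closed in a cover `D`, then
`A` contains a maximal ideal `J` of `D`. For a maximal ideal `N` of `S` over `J`, the rings `A` and
`D` have different images in `S ⧸ N`. But `R ⊆ T` is infra-integral, so `T` has the same image as
`R`, and `D ⊆ A ⊔ T` has the same image as `A`, a contradiction.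
-/

section Order

theorem wellFoundedLT_of_finite_chains {α : Type*} [PartialOrder α]
    (h : ∀ C : Set α, IsChain (· ≤ ·) C → C.Finite) : WellFoundedLT α := by
  refine ⟨RelEmbedding.wellFounded_iff_isEmpty.2 ⟨fun f => ?_⟩⟩
  have hf : StrictAnti f := fun _ _ hij => f.map_rel_iff.2 hij
  exact Set.infinite_range_of_injective f.injective (h _ hf.antitone.isChain_range)

theorem wellFoundedGT_of_finite_chains {α : Type*} [PartialOrder α]
    (h : ∀ C : Set α, IsChain (· ≤ ·) C → C.Finite) : WellFoundedGT α := by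
  refine ⟨RelEmbedding.wellFounded_iff_isEmpty.2 ⟨fun f => ?_⟩⟩
  have hf : StrictMono f := fun _ _ hij => f.map_rel_iff.2 hij
  exact Set.infinite_range_of_injective f.injective (h _ hf.monotone.isChain_range)

theorem exists_ltSeries_last_eq {α : Type*} [PartialOrder α] (p : LTSeries α) {a : α}
    (hpa : p.last ≤ a) :
    ∃ p' : LTSeries α, p'.head = p.head ∧ p'.last = a ∧ p.length ≤ p'.length ∧
      (p.last < a → p.length < p'.length) := by
  rcases hpa.eq_or_lt with rfl | hlt
  · exact ⟨p, rfl, rfl, le_rfl, fun h => absurd h (lt_irrefl _)⟩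
  · exact ⟨p.snoc a hlt, p.head_snoc a hlt, p.last_snoc a hlt, Nat.le_succ _,
      fun _ => Nat.lt_succ_self _⟩

theorem exists_ltSeries_fst_snd_length_le {α β : Type*} [PartialOrder α] [PartialOrder β]
    (s : LTSeries (α × β)) :
    ∃ (p : LTSeries α) (q : LTSeries β), p.head = s.head.1 ∧ p.last = s.last.1 ∧
      q.head = s.head.2 ∧ q.last = s.last.2 ∧ s.length ≤ p.length + q.length := by
  induction s using RelSeries.inductionOn' with
  | singleton x =>
    exact ⟨RelSeries.singleton _ x.1, RelSeries.singleton _ x.2, rfl, rfl, rfl, rfl, le_rfl⟩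
  | snoc s x hx ih =>
    have hlt : s.last < x := hx
    obtain ⟨p, q, hp₀, hp, hq₀, hq, hlen⟩ := ih
    obtain ⟨p', hp'₀, hp', hpp', hpp'_lt⟩ := exists_ltSeries_last_eq p (hp.trans_le hlt.le.1)
    obtain ⟨q', hq'₀, hq', hqq', hqq'_lt⟩ := exists_ltSeries_last_eq q (hq.trans_le hlt.le.2)
    refine ⟨p', q', ?_, ?_, ?_, ?_, ?_⟩
    · rw [hp'₀, hp₀, RelSeries.head_snoc]
    · rw [hp', RelSeries.last_snoc]
    · rw [hq'₀, hq₀, RelSeries.head_snoc]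
    · rw [hq', RelSeries.last_snoc]
    · rw [RelSeries.snoc_length]
      rcases Prod.lt_iff.1 hlt with ⟨h, -⟩ | ⟨-, h⟩
      · have := hpp'_lt (hp.trans_lt h)
        lia
      · have := hqq'_lt (hq.trans_lt h)
        lia

theorem exists_ltSeries_mem_of_strictMono_inf_prod_sup {α : Type*} [Lattice α] {t : α}
    (ht : StrictMono fun a => (a ⊓ t, a ⊔ t)) (c : LTSeries α) (hct : c.head ≤ t)
    (htc : t ≤ c.last) :
    ∃ s : LTSeries α, s.head = c.head ∧ s.last = c.last ∧ t ∈ s ∧ c.length ≤ s.length := by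
  obtain ⟨p, q, hp₀, hp, hq₀, hq, hlen⟩ := exists_ltSeries_fst_snd_length_le (c.map _ ht)
  simp only [LTSeries.head_map, LTSeries.last_map, inf_eq_left.2 hct, inf_eq_right.2 htc,
    sup_eq_right.2 hct, sup_eq_left.2 htc] at hp₀ hp hq₀ hq
  have hpq : p.last = q.head := hp.trans hq₀.symm
  refine ⟨p.smash q hpq, ?_, ?_, ?_, hlen⟩
  · rw [RelSeries.head_smash, hp₀]
  · rw [RelSeries.last_smash, hq]
  · exact ⟨_, (RelSeries.smash_castLE hpq (Fin.last p.length)).trans hp⟩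

theorem IsMaxChainFromTo.exists_mem_of_strictMono_inf_prod_sup {α : Type*} [Lattice α]
    [BoundedOrder α] [WellFoundedLT α] [WellFoundedGT α] {t : α}
    (ht : StrictMono fun a => (a ⊓ t, a ⊔ t)) {n : ℕ} {c : Fin (n + 1) → α}
    (hc : IsMaxChainFromTo ⊥ ⊤ n c) :
    ∃ (m : ℕ) (c' : Fin (m + 1) → α), IsMaxChainFromTo ⊥ ⊤ m c' ∧ (∃ i, c' i = t) ∧ n ≤ m := by
  obtain ⟨hbot, htop, hcov⟩ := hc
  let chain : LTSeries α := ⟨n, c, fun i => (hcov i).lt⟩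
  have hhead : chain.head = ⊥ := hbot
  have hlast : chain.last = ⊤ := htop
  obtain ⟨s, -, -, ⟨i, hi⟩, hns⟩ := exists_ltSeries_mem_of_strictMono_inf_prod_sup ht chain
    (hhead.trans_le bot_le) (le_top.trans_eq hlast.symm)
  obtain ⟨s', e, he, hs'₀, hs'⟩ := s.exists_relSeries_covBy_and_head_eq_bot_and_last_eq_bot
  have hss' : s.length ≤ s'.length := by
    simpa only [Fintype.card_fin, Nat.add_le_add_iff_right] using Fintype.card_le_of_embedding e
  exact ⟨s'.length, s', ⟨hs'₀, hs', s'.step⟩, ⟨e i, (congrFun he i).trans hi⟩, hns.trans hss'⟩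

end Order

theorem isField_of_isIdempotentElem_eq_zero_or_one {Q : Type*} [CommRing Q] [IsArtinianRing Q]
    [IsReduced Q] [Nontrivial Q] (h : ∀ e : Q, IsIdempotentElem e → e = 0 ∨ e = 1) :
    IsField Q := by
  have := IsArtinianRing.isSemisimpleRing_of_isReduced Q
  refine ⟨exists_pair_ne Q, mul_comm, fun {z} hz => ?_⟩
  obtain ⟨e, he, hze⟩ := IsSemisimpleRing.ideal_eq_span_idempotent (Ideal.span {z})
  rcases h e he with rfl | rfl
  · exact absurd (Ideal.span_singleton_eq_bot.1 (hze.trans Ideal.span_singleton_zero)) hz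
  · exact (Ideal.span_singleton_eq_top.1 (hze.trans Ideal.span_singleton_one)).exists_right_inv

section Subalgebra

variable {R S : Type*} [CommRing R] [CommRing S] [Algebra R S]

theorem moduleFinite_of_isCoatom_subalgebra [Algebra.IsIntegral R S] {A : Subalgebra R S}
    (hA : IsCoatom A) : Module.Finite A S := by
  obtain ⟨y, -, hyA⟩ := SetLike.exists_of_lt hA.lt_top
  have hlt : A < (Algebra.adjoin A {y}).restrictScalars R :=
    SetLike.lt_iff_le_and_exists.2 ⟨fun a ha => (Algebra.adjoin A {y}).algebraMap_mem ⟨a, ha⟩,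
      y, Algebra.self_mem_adjoin_singleton A y, hyA⟩
  have htop : Algebra.adjoin A {y} = ⊤ :=
    Algebra.eq_top_iff.2 fun b => (hA.2 _ hlt).ge (Algebra.mem_top (x := b))
  have hy : IsIntegral A y := (Algebra.IsIntegral.isIntegral (R := R) y).tower_top
  have hfg := hy.fg_adjoin_singleton
  rw [htop, Algebra.top_toSubmodule] at hfg
  exact Module.finite_def.2 hfg

theorem mem_comap_map_quotientMk_iff {A : Subalgebra R S} {J : Ideal S} {b : S} :
    b ∈ (A.map (Ideal.Quotient.mkₐ R J)).comap (Ideal.Quotient.mkₐ R J) ↔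
      ∃ a ∈ A, b - a ∈ J := by
  simp only [Subalgebra.mem_comap, Subalgebra.mem_map, Ideal.Quotient.mkₐ_eq_mk,
    eq_comm (b := Ideal.Quotient.mk J b), Ideal.Quotient.eq]

theorem exists_ideal_subset_of_isCoatom_subalgebra {A : Subalgebra R S} [Module.Finite A S]
    (hA : IsCoatom A) :
    ∃ J : Ideal S, (J : Set S) ⊆ A ∧ (J.comap (algebraMap A S)).IsMaximal := by
  obtain ⟨b, -, hbA⟩ := SetLike.exists_of_lt hA.lt_top
  have hbot : Subalgebra.toSubmodule (⊥ : Subalgebra A S) ≠ ⊤ := fun h => by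
    obtain ⟨a, rfl⟩ := Algebra.mem_bot.1 (h.ge (Submodule.mem_top (x := b)))
    exact hbA a.2
  obtain ⟨V, hV, hAV⟩ := (eq_top_or_exists_le_coatom _).resolve_left hbot
  -- The annihilator `M` of the simple `A`-module `S ⧸ V` is maximal, and `A + M S ⊆ V` is proper.
  have := isSimpleModule_iff_isCoatom.2 hV
  let M : Ideal A := Module.annihilator A (S ⧸ V)
  have hM : M.IsMaximal := IsSimpleModule.annihilator_isMaximal
  let J := M.map (algebraMap A S)
  have hJV : J.restrictScalars A ≤ V := by
    rw [← Ideal.smul_top_eq_map, Submodule.smul_le]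
    intro r hr n _
    rw [← Submodule.Quotient.mk_eq_zero, Submodule.Quotient.mk_smul]
    exact Module.mem_annihilator.1 hr _
  have hsup : (A.map (Ideal.Quotient.mkₐ R J)).comap (Ideal.Quotient.mkₐ R J) = A := by
    refine (hA.le_iff_eq fun h => hV.1 (eq_top_iff.2 fun b _ => ?_)).1 fun a ha => ⟨a, ha, rfl⟩
    obtain ⟨a, ha, hab⟩ := mem_comap_map_quotientMk_iff.1 (h.ge (Algebra.mem_top (x := b)))
    exact (Submodule.sub_mem_iff_left V (hAV (Algebra.mem_bot.2 ⟨⟨a, ha⟩, rfl⟩))).1 (hJV hab)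
  have hJA : (J : Set S) ⊆ A := fun j hj =>
    hsup.le (mem_comap_map_quotientMk_iff.2 ⟨0, A.zero_mem, by rwa [sub_zero]⟩)
  refine ⟨J, hJA, ?_⟩
  rw [← hM.eq_of_le _ Ideal.le_comap_map]
  · exact hM
  · exact Ideal.comap_ne_top _ fun h => hbA (hJA (h.ge Submodule.mem_top))

/-- The order isomorphism between the subalgebras of a subalgebra `D` and the subalgebras
contained in `D`, as `Submodule.mapIic` for submodules. -/
def subalgebraMapIic (D : Subalgebra R S) : Subalgebra R D ≃o Set.Iic D where
  toFun E := ⟨E.map D.val,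
    (Subalgebra.map_mono le_top).trans_eq ((Algebra.map_top D.val).trans D.range_val)⟩
  invFun C := (C : Subalgebra R S).comap D.val
  left_inv E := Subalgebra.comap_map_eq_self_of_injective Subtype.val_injective E
  right_inv C := Subtype.ext (Subalgebra.map_comap_eq_self (C.2.trans_eq D.range_val.symm))
  map_rel_iff' {E F} := by
    change E.map D.val ≤ F.map D.val ↔ E ≤ F
    rw [Subalgebra.map_le, Subalgebra.comap_map_eq_self_of_injective Subtype.val_injective]

theorem isCoatom_comap_val_of_covBy {C D : Subalgebra R S} (hCD : C ⋖ D) :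
    IsCoatom (C.comap D.val) :=
  ((subalgebraMapIic D).symm.isCoatom_iff ⟨C, hCD.le⟩).2 ((covBy_iff_coatom_Iic hCD.le).1 hCD)

end Subalgebra

section TClosed

variable {R S : Type*} [CommRing R] [CommRing S] [Algebra R S]

theorem IsTClosedIn.comap {S' : Type*} [CommRing S'] [Algebra R S'] {T : Subalgebra R S}
    (hT : IsTClosedIn T) (f : S' →ₐ[R] S) : IsTClosedIn (T.comap f) := by
  intro b r hr h₂ h₃
  simp only [Subalgebra.mem_comap, map_sub, map_mul, map_pow] at hr h₂ h₃
  exact hT (f b) (f r) hr h₂ h₃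

theorem IsTClosedIn.mem_of_mul_mem {T : Subalgebra R S} (hT : IsTClosedIn T) {b r : S}
    (hr : r ∈ T) (h₂ : b ^ 2 - r * b ∈ T) (h₃ : (b ^ 2 - r * b) * b ∈ T) : b ∈ T := by
  refine hT b r hr h₂ ?_
  convert h₃ using 1
  ring

theorem IsTClosedIn.exists_isMaximal_of_isCoatom {A : Subalgebra R S} [Module.Finite A S]
    (hA : IsTClosedIn A) (hcoatom : IsCoatom A) :
    ∃ J : Ideal S, J.IsMaximal ∧ (J : Set S) ⊆ A := by
  obtain ⟨J, hJA, hM⟩ := exists_ideal_subset_of_isCoatom_subalgebra hcoatom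
  have hprime {a b : S} (ha : a ∈ A) (hb : b ∈ A) (hab : a * b ∈ J) : a ∈ J ∨ b ∈ J :=
    hM.isPrime.mem_or_mem (x := ⟨a, ha⟩) (y := ⟨b, hb⟩) hab
  have hmem {r b : S} (hr : r ∈ A) (hb : b ^ 2 - r * b ∈ J) : b ∈ A :=
    hA.mem_of_mul_mem hr (hJA hb) (hJA (J.mul_mem_right b hb))
  have : IsArtinianRing (S ⧸ J) := by
    let := Ideal.Quotient.field (J.comap (algebraMap A S))
    have := Module.Finite.of_restrictScalars_finite A (A ⧸ J.comap (algebraMap A S)) (S ⧸ J)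
    exact IsArtinianRing.of_finite (A ⧸ J.comap (algebraMap A S)) (S ⧸ J)
  have : Nontrivial (S ⧸ J) := Ideal.Quotient.nontrivial_iff.2 fun h =>
    hM.ne_top (by rw [h, Ideal.comap_top])
  have : IsReduced (S ⧸ J) := by
    refine (isReduced_iff_pow_one_lt 2 one_lt_two).2 fun x hx => ?_
    obtain ⟨b, rfl⟩ := Ideal.Quotient.mk_surjective x
    have hb : b ^ 2 ∈ J := Ideal.Quotient.eq_zero_iff_mem.1 hx
    have hbA : b ∈ A := hmem A.zero_mem (by simpa using hb)
    exact Ideal.Quotient.eq_zero_iff_mem.2 ((hprime hbA hbA (sq b ▸ hb)).elim id id)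
  refine ⟨J, Ideal.Quotient.maximal_of_isField J
    (isField_of_isIdempotentElem_eq_zero_or_one fun e he => ?_), hJA⟩
  obtain ⟨b, rfl⟩ := Ideal.Quotient.mk_surjective e
  have hb : b * (b - 1) ∈ J := by
    rw [mul_sub_one]
    exact Ideal.Quotient.eq.1 he
  have hbA : b ∈ A := hmem A.one_mem (by convert hb using 1; ring)
  exact (hprime hbA (A.sub_mem hbA A.one_mem) hb).imp Ideal.Quotient.eq_zero_iff_mem.2
    Ideal.Quotient.eq.2

theorem IsTClosedIn.exists_isMaximal_of_covBy {C D : Subalgebra R S} [Algebra.IsIntegral R D]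
    (hC : IsTClosedIn (C.comap D.val)) (hCD : C ⋖ D) :
    ∃ J : Ideal D, J.IsMaximal ∧ ∀ x ∈ J, (x : S) ∈ C :=
  have hcoatom := isCoatom_comap_val_of_covBy hCD
  have := moduleFinite_of_isCoatom_subalgebra hcoatom
  hC.exists_isMaximal_of_isCoatom hcoatom

theorem IsTClosedIn.exists_mem_eq_mul {C D : Subalgebra R S} (hC : IsTClosedIn C) (hCD : C ≤ D)
    {J : Ideal D} (hJ : J.IsRadical) (hJC : ∀ x ∈ J, (x : S) ∈ C) {b r : S} (hr : r ∈ D)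
    (h₂ : b ^ 2 - r * b ∈ D) (h₃ : b ^ 3 - r * b ^ 2 ∈ D) {j : D} (hj : j ∈ J) :
    ∃ k ∈ J, (k : S) = j * b := by
  -- `j * b` meets the conditions of t-closedness with parameter `j * r`, and then its square,
  -- `(j * r) * (j * b) + j ^ 2 * (b ^ 2 - r * b)`, lies in `J`.
  have hj₁ : j * ⟨r, hr⟩ ∈ J := J.mul_mem_right _ hj
  have hj₂ : j ^ 2 * ⟨_, h₂⟩ ∈ J := J.mul_mem_right _ (J.pow_mem_of_mem hj 2 two_pos)
  have hj₃ : j ^ 3 * ⟨_, h₃⟩ ∈ J := J.mul_mem_right _ (J.pow_mem_of_mem hj 3 three_pos)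
  have hjb : (j : S) * b ∈ C := by
    refine hC _ _ (hJC _ hj₁) ?_ ?_
    · convert hJC _ hj₂ using 1
      push_cast
      ring
    · convert hJC _ hj₃ using 1
      push_cast
      ring
  refine ⟨⟨j * b, hCD hjb⟩, hJ ⟨2, ?_⟩, rfl⟩
  convert J.add_mem (J.mul_mem_right ⟨j * b, hCD hjb⟩ hj₁) hj₂ using 1
  ext
  push_cast
  ring

theorem IsTClosedIn.mem_of_sq_sub_mul_eq {C D : Subalgebra R S} (hC : IsTClosedIn C)
    (hCD : C ≤ D) {J : Ideal D} (hJ : J.IsMaximal) (hJC : ∀ x ∈ J, (x : S) ∈ C) {b : S}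
    (hJb : ∀ j ∈ J, ∃ k ∈ J, (k : S) = j * b) {r u : D} (hu : u ∈ J)
    (hb : b ^ 2 - r * b = u) : b ∈ D := by
  have hmem {x y : D} (hx : x ∈ J) {s : S} (hs : s ∈ C) (h : (y * b) ^ 2 - s * (y * b) = x) :
      y * b ∈ C := by
    obtain ⟨k, hk, hkb⟩ := hJb _ (J.mul_mem_right y hx)
    refine hC.mem_of_mul_mem hs (h ▸ hJC x hx) ?_
    rw [h, ← mul_assoc, ← D.coe_mul, ← hkb]
    exact hJC k hk
  -- Modulo `J`, either `b` is nilpotent or `r` is invertible and `r⁻¹ * b` is idempotent.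
  by_cases hr : r ∈ J
  · obtain ⟨k, hkJ, hk⟩ := hJb r hr
    have hb' : ((1 : D) * b) ^ 2 - 0 * ((1 : D) * b) = (u + k : D) := by
      push_cast
      linear_combination hb - hk
    simpa only [OneMemClass.coe_one, one_mul] using
      hCD (hmem (J.add_mem hu hkJ) C.zero_mem hb')
  · obtain ⟨y, i, hi, hy⟩ := hJ.exists_inv hr
    obtain ⟨k, hkJ, hk⟩ := hJb i hi
    have hy' : (y : S) * r + i = 1 := congrArg Subtype.val hy
    have hyb : (y * b) ^ 2 - 1 * (y * b) = (y ^ 2 * u - y * k : D) := by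
      push_cast
      linear_combination (y : S) ^ 2 * hb + (y : S) * b * hy' + y * hk
    have hybC : y * b ∈ C :=
      hmem (J.sub_mem (J.mul_mem_left _ hu) (J.mul_mem_left _ hkJ)) C.one_mem hyb
    have hb' : b = r * (y * b) + k := by linear_combination -b * hy' - hk
    exact hb' ▸ D.add_mem (D.mul_mem r.2 (hCD hybC)) k.2

theorem IsTClosedIn.of_covBy {C D : Subalgebra R S} [Algebra.IsIntegral R D]
    (hC : IsTClosedIn C) (hCD : C ⋖ D) : IsTClosedIn D := by
  obtain ⟨J, hJ, hJC⟩ := (hC.comap D.val).exists_isMaximal_of_covBy hCD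
  intro b r hr h₂ h₃
  have hJb (j : D) (hj : j ∈ J) : ∃ k ∈ J, (k : S) = j * b :=
    hC.exists_mem_eq_mul hCD.le hJ.isPrime.isRadical hJC hr h₂ h₃ hj
  let u : D := ⟨b ^ 2 - r * b, h₂⟩
  let v : D := ⟨b ^ 3 - r * b ^ 2, h₃⟩
  by_cases hu : u ∈ J
  · exact hC.mem_of_sq_sub_mul_eq hCD.le hJ hJC hJb (r := ⟨r, hr⟩) hu rfl
  · obtain ⟨y, i, hi, hy⟩ := hJ.exists_inv hu
    obtain ⟨k, -, hk⟩ := hJb i hi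
    have hy' : (y : S) * u + i = 1 := congrArg Subtype.val hy
    have hb : b = (y * v + k : D) := by
      push_cast
      linear_combination -b * hy' - hk
    exact hb ▸ (y * v + k).2

theorem IsTClosedIn.mono [Algebra.IsIntegral R S] [WellFoundedLT (Subalgebra R S)]
    [WellFoundedGT (Subalgebra R S)] {C A : Subalgebra R S} (hC : IsTClosedIn C) (hCA : C ≤ A) :
    IsTClosedIn A := by
  induction C using WellFoundedGT.induction with
  | ind C ih =>
    rcases hCA.eq_or_lt with rfl | hlt
    · exact hC
    · obtain ⟨D, hCD, hDA⟩ := exists_covBy_le_of_lt hlt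
      have : Algebra.IsIntegral R D := .of_injective D.val Subtype.val_injective
      exact ih D hCD.lt (hC.of_covBy hCD) hDA

theorem exists_isMaximal_not_map_quotientMk_le {A D : Subalgebra R S} [Algebra.IsIntegral D S]
    {J : Ideal D} [J.IsMaximal] (hJA : ∀ x ∈ J, (x : S) ∈ A) (hAD : A < D) :
    ∃ N : Ideal S, N.IsMaximal ∧
      ¬ D.map (Ideal.Quotient.mkₐ R N) ≤ A.map (Ideal.Quotient.mkₐ R N) := by
  obtain ⟨N, hN, hNJ⟩ := Ideal.exists_ideal_over_maximal_of_isIntegral (S := S) J (by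
    rw [(RingHom.injective_iff_ker_eq_bot (algebraMap D S)).1 Subtype.val_injective]
    exact bot_le)
  refine ⟨N, hN, fun h => hAD.not_ge fun d hd => ?_⟩
  obtain ⟨a, ha, hda⟩ := mem_comap_map_quotientMk_iff.1 (Subalgebra.map_le.1 h hd)
  have hdaJ : (⟨d, hd⟩ - ⟨a, hAD.le ha⟩ : D) ∈ J := hNJ.le hda
  exact sub_add_cancel d a ▸ A.add_mem (hJA _ hdaJ) ha

theorem IsInfraIntegral.surjective_algebraMap_quotient {A B : Type*} [CommRing A] [CommRing B]
    [Algebra A B] (h : IsInfraIntegral A B) (Q : Ideal B) [hQ : Q.IsMaximal] :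
    Function.Surjective (algebraMap A (B ⧸ Q)) := by
  have := h.1
  have hP : (Q.comap (algebraMap A B)).IsMaximal :=
    Ideal.isMaximal_comap_of_isIntegral_of_isMaximal Q
  have hres : Function.Surjective (Ideal.ResidueField.map _ Q (algebraMap A B) rfl) :=
    (h.2 Q hQ.isPrime).surjective
  intro x
  obtain ⟨a, ha⟩ := (hres.comp (Ideal.algebraMap_residueField_surjective _))
    (algebraMap (B ⧸ Q) Q.ResidueField x)
  refine ⟨a, Q.bijective_algebraMap_quotient_residueField.injective ?_⟩
  rw [← ha, Function.comp_apply, Ideal.ResidueField.map_algebraMap]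
  rfl

theorem IsInfraIntegral.map_quotientMk_eq_bot [Algebra.IsIntegral R S] {T : Subalgebra R S}
    (hT : IsInfraIntegral R T) (N : Ideal S) [N.IsMaximal] :
    T.map (Ideal.Quotient.mkₐ R N) = ⊥ := by
  have : Algebra.IsIntegral T S := .tower_top R
  have hQ : (N.comap (algebraMap T S)).IsMaximal :=
    Ideal.isMaximal_comap_of_isIntegral_of_isMaximal N
  refine eq_bot_iff.2 (Subalgebra.map_le.2 fun t ht => ?_)
  obtain ⟨r, hr⟩ := hT.surjective_algebraMap_quotient (N.comap (algebraMap T S))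
    (Ideal.Quotient.mk _ ⟨t, ht⟩)
  have hrt : algebraMap R T r - ⟨t, ht⟩ ∈ N.comap (algebraMap T S) := Ideal.Quotient.eq.1 hr
  exact Algebra.mem_bot.2 ⟨r, Ideal.Quotient.eq.2 hrt⟩

theorem IsTClosure.strictMono_inf_prod_sup [Algebra.IsIntegral R S]
    [WellFoundedLT (Subalgebra R S)] [WellFoundedGT (Subalgebra R S)] {T : Subalgebra R S}
    (hT : IsTClosure T) : StrictMono fun A : Subalgebra R S => (A ⊓ T, A ⊔ T) := by
  intro A B hAB
  refine lt_of_le_of_ne ⟨inf_le_inf_right T hAB.le, sup_le_sup_right hAB.le T⟩ fun h => ?_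
  obtain ⟨hinf, hsup⟩ := Prod.mk.inj h
  obtain ⟨D, hAD, hDB⟩ := exists_covBy_le_of_lt hAB
  have : Algebra.IsIntegral R D := .of_injective D.val Subtype.val_injective
  have : Algebra.IsIntegral D S := .tower_top R
  have : WellFoundedLT (Subalgebra R D) := (subalgebraMapIic D).strictMono.wellFoundedLT
  have : WellFoundedGT (Subalgebra R D) := (subalgebraMapIic D).strictMono.wellFoundedGT
  have hTA : T.comap D.val ≤ A.comap D.val := fun x hx => (hinf.ge ⟨hDB x.2, hx⟩).1
  obtain ⟨J, hJ, hJA⟩ := ((hT.2.comap D.val).mono hTA).exists_isMaximal_of_covBy hAD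
  obtain ⟨N, hN, hDN⟩ := exists_isMaximal_not_map_quotientMk_le hJA hAD.lt
  refine hDN ?_
  let π := Ideal.Quotient.mkₐ R N
  calc D.map π ≤ (A ⊔ T).map π := Subalgebra.map_mono (hDB.trans (le_sup_left.trans hsup.ge))
    _ = A.map π ⊔ T.map π := Algebra.map_sup π A T
    _ = A.map π := by rw [hT.1.map_quotientMk_eq_bot N, sup_bot_eq]

end TClosed

/-- Let `R ⊂ S` be an integral FCP extension with t-closure `T`. For any
maximal chain `𝒞` from `R` to `S` there is a maximal chain `𝒞'` from `R` to `S`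
containing `T` with `ℓ(𝒞') ≥ ℓ(𝒞)`. -/
theorem stmt_16 {R S : Type*} [CommRing R] [CommRing S] [Algebra R S]
    (hinj : Function.Injective (algebraMap R S))
    (hproper : ¬Function.Surjective (algebraMap R S))
    (hFCP : IsFCPExt R S) (hint : Algebra.IsIntegral R S)
    (T : Subalgebra R S) (hT : IsTClosure T)
    (n : ℕ) (c : Fin (n + 1) → Subalgebra R S)
    (hc : IsMaxChainFromTo (⊥ : Subalgebra R S) ⊤ n c) :
    ∃ (m : ℕ) (c' : Fin (m + 1) → Subalgebra R S),
      IsMaxChainFromTo (⊥ : Subalgebra R S) ⊤ m c' ∧ (∃ i, c' i = T) ∧ n ≤ m := by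
  have := wellFoundedLT_of_finite_chains hFCP
  have := wellFoundedGT_of_finite_chains hFCP
  exact hc.exists_mem_of_strictMono_inf_prod_sup hT.strictMono_inf_prod_sup
end

section
/- Let R ⊆ S be an integral FCP ring extension with S a local ring (equivalently, R is unbranched in S since the extension is integral), and let T ∈ [R,S] be the t-closure of R in S (i.e., R ⊆ T is infra-integral and T ⊆ S is t-closed). Then R ⊆ S is catenarian if and only if [R,S] = [R,T] ∪ [T,S] and T ⊆ S is catenarian. -/
/-! ### Maximal chains in partial orders -/

/-- `CovSteps n a b`: a chain of `n` successive coverings leads from `a` up to `b`. This is the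
existence of a maximal chain in the sense of `IsMaxChainFromTo`, in a form suited to induction. -/
inductive CovSteps {α : Type*} [PartialOrder α] : ℕ → α → α → Prop
  | refl (a : α) : CovSteps 0 a a
  | cons {n : ℕ} {a b c : α} : a ⋖ b → CovSteps n b c → CovSteps (n + 1) a c

section PartialOrder

variable {α β : Type*} [PartialOrder α] [PartialOrder β] {a b c t : α} {m n : ℕ}

theorem IsMaxChainFromTo.covSteps {f : Fin (n + 1) → α} (h : IsMaxChainFromTo a b n f) :
    CovSteps n a b := by
  induction n generalizing a with
  | zero => obtain ⟨rfl, rfl, -⟩ := h; exact .refl _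
  | succ n ih =>
    obtain ⟨rfl, rfl, hf⟩ := h
    exact .cons (hf 0) (ih (f := fun i => f i.succ) ⟨rfl, rfl, fun i => hf i.succ⟩)

namespace CovSteps

theorem exists_isMaxChainFromTo (h : CovSteps n a b) :
    ∃ f : Fin (n + 1) → α, IsMaxChainFromTo a b n f := by
  induction h with
  | refl a => exact ⟨fun _ => a, rfl, rfl, fun i => i.elim0⟩
  | @cons n a _ _ hab _ ih =>
    obtain ⟨f, rfl, rfl, hf⟩ := ih
    exact ⟨Fin.cons a f, rfl, rfl, Fin.cases hab hf⟩

theorem le (h : CovSteps n a b) : a ≤ b := by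
  induction h with
  | refl => exact le_rfl
  | cons hab _ ih => exact hab.le.trans ih

theorem pos (h : CovSteps n a b) (hab : a < b) : 0 < n := by
  cases h with
  | refl => exact absurd hab (lt_irrefl a)
  | cons => exact Nat.succ_pos _

theorem one_lt (h : CovSteps n a b) (hab : a < b) (hcov : ¬ a ⋖ b) : 1 < n := by
  cases h with
  | refl => exact absurd hab (lt_irrefl a)
  | cons hax hxb =>
    exact Nat.succ_lt_succ (hxb.pos (hxb.le.lt_of_ne fun hx => hcov (hx ▸ hax)))

theorem append (h : CovSteps m a b) (h' : CovSteps n b c) : CovSteps (m + n) a c := by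
  induction h with
  | refl => rwa [Nat.zero_add]
  | cons hab _ ih => rw [Nat.add_right_comm]; exact .cons hab (ih h')

theorem map {f : α → β} (h : CovSteps n a b) (hf : ∀ ⦃x y⦄, y ≤ b → x ⋖ y → f x ⋖ f y) :
    CovSteps n (f a) (f b) := by
  induction h with
  | refl => exact .refl _
  | cons hab hbc ih => exact .cons (hf hbc.le hab) (ih hf)

theorem exists_of_le [WellFoundedLT α] [WellFoundedGT α] (h : a ≤ b) : ∃ n, CovSteps n a b := by
  induction a using WellFoundedGT.induction with
  | ind a ih =>
    rcases h.eq_or_lt with rfl | hlt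
    · exact ⟨0, .refl _⟩
    · obtain ⟨x, hax, hxb⟩ := exists_covBy_le_of_lt hlt
      obtain ⟨n, hn⟩ := ih x hax.lt hxb
      exact ⟨n + 1, .cons hax hn⟩

theorem exists_add_of_forall_le_or_ge (h : CovSteps n a b) (ht : ∀ u : α, u ≤ t ∨ t ≤ u)
    (hat : a ≤ t) (htb : t ≤ b) : ∃ p q, n = p + q ∧ CovSteps p a t ∧ CovSteps q t b := by
  induction h with
  | refl a =>
    obtain rfl := le_antisymm hat htb
    exact ⟨0, 0, rfl, .refl _, .refl _⟩
  | @cons n a x b hax hxb ih =>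
    rcases hat.eq_or_lt with rfl | hlt
    · exact ⟨0, n + 1, (Nat.zero_add _).symm, .refl _, .cons hax hxb⟩
    · have hxt : x ≤ t := (ht x).elim id fun htx =>
        (htx.eq_or_lt.resolve_right (hax.2 hlt)).ge
      obtain ⟨p, q, rfl, hp, hq⟩ := ih hxt htb
      exact ⟨p + 1, q, Nat.add_right_comm p q 1, .cons hax hp, hq⟩

end CovSteps

theorem isCatenarianFromTo_iff_covSteps :
    IsCatenarianFromTo a b ↔ ∀ m n, CovSteps m a b → CovSteps n a b → m = n := by
  refine ⟨fun h m n hm hn => ?_, fun h m n c d hc hd => h m n hc.covSteps hd.covSteps⟩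
  obtain ⟨c, hc⟩ := hm.exists_isMaxChainFromTo
  obtain ⟨d, hd⟩ := hn.exists_isMaxChainFromTo
  exact h m n c d hc hd

theorem IsCatenarianFromTo.of_le_left [WellFoundedLT α] [WellFoundedGT α]
    (h : IsCatenarianFromTo a b) (hat : a ≤ t) : IsCatenarianFromTo t b := by
  rw [isCatenarianFromTo_iff_covSteps] at h ⊢
  intro m n hm hn
  obtain ⟨k, hk⟩ := CovSteps.exists_of_le hat
  exact Nat.add_left_cancel (h _ _ (hk.append hm) (hk.append hn))

theorem IsCatenarianFromTo.trans (h₁ : IsCatenarianFromTo a t) (h₂ : IsCatenarianFromTo t b)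
    (ht : ∀ u : α, u ≤ t ∨ t ≤ u) (hat : a ≤ t) (htb : t ≤ b) : IsCatenarianFromTo a b := by
  rw [isCatenarianFromTo_iff_covSteps] at h₁ h₂ ⊢
  intro m n hm hn
  obtain ⟨p, q, rfl, hp, hq⟩ := hm.exists_add_of_forall_le_or_ge ht hat htb
  obtain ⟨p', q', rfl, hp', hq'⟩ := hn.exists_add_of_forall_le_or_ge ht hat htb
  rw [h₁ p p' hp hp', h₂ q q' hq hq']

theorem IsCatenarianFromTo.of_map {f : α → β} (h : IsCatenarianFromTo (f a) (f b))
    (hf : ∀ ⦃x y⦄, y ≤ b → x ⋖ y → f x ⋖ f y) : IsCatenarianFromTo a b := by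
  rw [isCatenarianFromTo_iff_covSteps] at h ⊢
  exact fun m n hm hn => h m n (hm.map hf) (hn.map hf)

theorem wellFoundedLT_of_forall_isChain_finite
    (h : ∀ C : Set α, IsChain (· ≤ ·) C → C.Finite) : WellFoundedLT α := by
  refine ⟨RelEmbedding.wellFounded_iff_isEmpty.2 ⟨fun f => ?_⟩⟩
  have hf : StrictAnti f := fun _ _ hij => f.map_rel_iff.2 hij
  exact Set.infinite_range_of_injective f.injective (h _ hf.antitone.isChain_range)

theorem wellFoundedGT_of_forall_isChain_finite
    (h : ∀ C : Set α, IsChain (· ≤ ·) C → C.Finite) : WellFoundedGT α := by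
  refine (wellFoundedLT_dual_iff α).1 (wellFoundedLT_of_forall_isChain_finite fun C hC => ?_)
  exact h (OrderDual.toDual ⁻¹' C) hC.symm

end PartialOrder

/-! ### Separating elements of lattices -/

section Lattice

variable {α : Type*} [Lattice α] {a b t u : α} {n : ℕ}

theorem isCatenarianFromTo_of_isModularLattice [IsModularLattice α] (a b : α) :
    IsCatenarianFromTo a b := by
  rintro m n c d ⟨hc₀, hc₁, hc⟩ ⟨hd₀, hd₁, hd⟩
  let s : CompositionSeries α := { length := m, toFun := c, step := hc }
  let s' : CompositionSeries α := { length := n, toFun := d, step := hd }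
  exact (CompositionSeries.jordan_holder s s' (hc₀.trans hd₀.symm) (hc₁.trans hd₁.symm)).length_eq

/-- An element `t` of a lattice separates coverings if each covering `a ⋖ b` moves exactly one of
the meet and the join with `t`. A join moves by a covering; the way a meet moves is a covering only
if `a ≤ t`. The two cases are modelled on inert and ramified minimal ring extensions. -/
def SeparatesCovBy (t : α) : Prop :=
  ∀ ⦃a b : α⦄, a ⋖ b →
    (a ⊓ t = b ⊓ t ∧ a ⊔ t ⋖ b ⊔ t) ∨
      (a ⊔ t = b ⊔ t ∧ a ⊓ t < b ⊓ t ∧ (a ⊓ t ⋖ b ⊓ t → a ≤ t))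

namespace SeparatesCovBy

variable [WellFoundedLT α] [WellFoundedGT α]

theorem exists_covSteps_inf_sup (ht : SeparatesCovBy t) (h : CovSteps n a b) :
    ∃ p q, CovSteps p (a ⊓ t) (b ⊓ t) ∧ CovSteps q (a ⊔ t) (b ⊔ t) ∧ n ≤ p + q ∧
      (¬ a ≤ t → a ⊓ t ≠ b ⊓ t → n < p + q) := by
  induction h with
  | refl a => exact ⟨0, 0, .refl _, .refl _, le_rfl, fun _ hne => absurd rfl hne⟩
  | @cons n a x b hax _ ih =>
    obtain ⟨p, q, hp, hq, hle, hlt⟩ := ih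
    rcases ht hax with ⟨hinf, hsup⟩ | ⟨hsup, hinf, hcov⟩
    · refine ⟨p, q + 1, hinf ▸ hp, .cons hsup hq, by omega, fun ha hne => ?_⟩
      have := hlt (fun hx => ha (hax.le.trans hx)) (hinf ▸ hne)
      omega
    · obtain ⟨k, hk⟩ := CovSteps.exists_of_le hinf.le
      have hk₀ := hk.pos hinf
      refine ⟨k + p, q, hk.append hp, hsup ▸ hq, by omega, fun ha _ => ?_⟩
      have := hk.one_lt hinf fun h => ha (hcov h)
      omega

theorem le_or_ge_of_isCatenarianFromTo (ht : SeparatesCovBy t) (h : IsCatenarianFromTo a b)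
    (hat : a ≤ t) (htb : t ≤ b) (hau : a ≤ u) (hub : u ≤ b) : u ≤ t ∨ t ≤ u := by
  by_contra! hu
  obtain ⟨m, hm⟩ := CovSteps.exists_of_le hau
  obtain ⟨n, hn⟩ := CovSteps.exists_of_le hub
  obtain ⟨p, q, hp, hq, hle, -⟩ := ht.exists_covSteps_inf_sup hm
  obtain ⟨p', q', hp', hq', -, hlt⟩ := ht.exists_covSteps_inf_sup hn
  rw [inf_eq_left.2 hat] at hp
  rw [sup_eq_right.2 hat] at hq
  rw [inf_eq_right.2 htb] at hp' hlt
  rw [sup_eq_left.2 htb] at hq'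
  have := hlt hu.1 fun hut => hu.2 (inf_eq_right.1 hut)
  have := isCatenarianFromTo_iff_covSteps.1 h _ _ (hm.append hn)
    ((hp.append hp').append (hq.append hq'))
  omega

end SeparatesCovBy

end Lattice

section Subalgebra

variable {R S : Type*} [CommRing R] [CommRing S] [Algebra R S]

/-! ### The subalgebra `R + I` -/

section BaseAddIdeal

variable (R) in
/-- The subalgebra `R + I` of `S`, for an ideal `I` of `S`: the elements whose class modulo `I`
comes from `R`. The t-closure in a local ring will be recognized as `R + M`. -/
def baseAddIdeal (I : Ideal S) : Subalgebra R S :=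
  (⊥ : Subalgebra R (S ⧸ I)).comap (Ideal.Quotient.mkₐ R I)

variable {I : Ideal S} {A B : Subalgebra R S} {s : S}

theorem mem_baseAddIdeal : s ∈ baseAddIdeal R I ↔ ∃ r : R, s - algebraMap R S r ∈ I := by
  simp only [baseAddIdeal, Subalgebra.mem_comap, Algebra.mem_bot, Set.mem_range,
    ← AlgHom.commutes (Ideal.Quotient.mkₐ R I), Ideal.Quotient.mkₐ_eq_mk,
    eq_comm (b := Ideal.Quotient.mk I s), Ideal.Quotient.eq]

theorem mem_baseAddIdeal_of_mem (hs : s ∈ I) : s ∈ baseAddIdeal R I :=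
  mem_baseAddIdeal.2 ⟨0, by simpa using hs⟩

theorem mem_sup_baseAddIdeal : s ∈ A ⊔ baseAddIdeal R I ↔ ∃ a ∈ A, s - a ∈ I := by
  have hsup : A ⊔ baseAddIdeal R I =
      (A.map (Ideal.Quotient.mkₐ R I)).comap (Ideal.Quotient.mkₐ R I) := by
    rw [baseAddIdeal, ← Algebra.map_bot (Ideal.Quotient.mkₐ R I), Subalgebra.comap_map_eq,
      Subalgebra.comap_map_eq, bot_sup_eq]
  simp only [hsup, Subalgebra.mem_comap, Subalgebra.mem_map, Ideal.Quotient.mkₐ_eq_mk,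
    eq_comm (b := Ideal.Quotient.mk I s), Ideal.Quotient.eq]

theorem inf_baseAddIdeal_eq_of_forall_mem (hAB : A ≤ B) (hI : ∀ b ∈ B, b ∈ I → b ∈ A) :
    A ⊓ baseAddIdeal R I = B ⊓ baseAddIdeal R I := by
  refine le_antisymm (inf_le_inf_right _ hAB) fun b ⟨hbB, hbT⟩ => ⟨?_, hbT⟩
  obtain ⟨r, hr⟩ := mem_baseAddIdeal.1 hbT
  simpa using add_mem (hI _ (sub_mem hbB (B.algebraMap_mem r)) hr) (A.algebraMap_mem r)

theorem sup_baseAddIdeal_covBy_of_forall_mem (h : A ⋖ B) (hI : ∀ b ∈ B, b ∈ I → b ∈ A) :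
    A ⊔ baseAddIdeal R I ⋖ B ⊔ baseAddIdeal R I := by
  refine ⟨(sup_le_sup_right h.le _).lt_of_not_ge fun hle => h.lt.not_ge fun b hb => ?_,
    fun C hAC hCB => ?_⟩
  · obtain ⟨a, ha, hba⟩ := mem_sup_baseAddIdeal.1 (hle (le_sup_left (b := baseAddIdeal R I) hb))
    simpa using add_mem (hI _ (sub_mem hb (h.le ha)) hba) ha
  · have hTC : baseAddIdeal R I ≤ C := le_sup_right.trans hAC.le
    rcases h.eq_or_eq (le_inf (le_sup_left.trans hAC.le) h.le) (inf_le_right (a := C)) with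
      hCA | hCB'
    · refine hAC.not_ge fun c hc => ?_
      obtain ⟨b, hb, hcb⟩ := mem_sup_baseAddIdeal.1 (hCB.le hc)
      have hbC : b ∈ C := by
        simpa using sub_mem hc (hTC (mem_baseAddIdeal_of_mem hcb))
      exact mem_sup_baseAddIdeal.2 ⟨b, hCA ▸ (⟨hbC, hb⟩ : b ∈ C ⊓ B), hcb⟩
    · exact hCB.not_ge (sup_le (inf_eq_right.1 hCB') hTC)

end BaseAddIdeal

/-! ### Coverings of intermediate rings -/

section CovBy

variable {A B : Subalgebra R S} {x y z : S}

theorem restrictScalars_adjoin_singleton_eq_of_covBy (h : A ⋖ B) (hyB : y ∈ B) (hyA : y ∉ A) :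
    (Algebra.adjoin A {y}).restrictScalars R = B := by
  rw [Algebra.restrictScalars_adjoin, Algebra.adjoin_union, Algebra.adjoin_eq]
  refine (h.eq_or_eq le_sup_left (sup_le h.le (Algebra.adjoin_singleton_le hyB))).resolve_left
    fun he => hyA (he ▸ ?_)
  exact le_sup_right (a := A) (Algebra.self_mem_adjoin_singleton R y)

theorem exists_eq_add_mul_of_covBy (h : A ⋖ B) (hyB : y ∈ B) (hyA : y ∉ A) (hz : z ∈ B) :
    ∃ a ∈ A, ∃ b ∈ B, z = a + y * b := by
  rw [← restrictScalars_adjoin_singleton_eq_of_covBy h hyB hyA] at hz ⊢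
  simp only [Subalgebra.mem_restrictScalars, Algebra.adjoin_singleton_eq_range_aeval] at hz ⊢
  obtain ⟨p, hp : Polynomial.aeval y p = z⟩ := hz
  refine ⟨p.coeff 0, (p.coeff 0).2, Polynomial.aeval y p.divX, ⟨p.divX, rfl⟩, ?_⟩
  rw [← p.X_mul_divX_add, map_add, map_mul, Polynomial.aeval_X, Polynomial.aeval_C] at hp
  rw [← hp, add_comm]
  rfl

theorem exists_eq_add_mul_of_covBy_of_sq_mem (h : A ⋖ B) (hyB : y ∈ B) (hyA : y ∉ A)
    (hy : y ^ 2 ∈ A) (hz : z ∈ B) : ∃ a ∈ A, ∃ b ∈ A, z = a + b * y := by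
  rw [← restrictScalars_adjoin_singleton_eq_of_covBy h hyB hyA, Subalgebra.mem_restrictScalars]
    at hz
  induction hz using Algebra.adjoin_induction with
  | mem w hw => exact ⟨0, A.zero_mem, 1, A.one_mem, by rw [Set.mem_singleton_iff.1 hw]; ring⟩
  | algebraMap a => exact ⟨a, a.2, 0, A.zero_mem, by rw [zero_mul, add_zero]; rfl⟩
  | add _ _ _ _ hu hv =>
    obtain ⟨a, ha, b, hb, rfl⟩ := hu
    obtain ⟨c, hc, d, hd, rfl⟩ := hv
    exact ⟨a + c, add_mem ha hc, b + d, add_mem hb hd, by ring⟩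
  | mul _ _ _ _ hu hv =>
    obtain ⟨a, ha, b, hb, rfl⟩ := hu
    obtain ⟨c, hc, d, hd, rfl⟩ := hv
    exact ⟨a * c + b * d * y ^ 2, add_mem (mul_mem ha hc) (mul_mem (mul_mem hb hd) hy),
      a * d + b * c, add_mem (mul_mem ha hd) (mul_mem hb hc), by ring⟩

end CovBy

section Integral

variable [Algebra.IsIntegral R S] {A B : Subalgebra R S}

theorem exists_mem_mul_eq_one_of_isUnit {a : S} (ha : a ∈ A) (hu : IsUnit a) :
    ∃ b ∈ A, b * a = 1 := by
  have : Algebra.IsIntegral A S := .tower_top R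
  obtain ⟨b, hb⟩ := (isUnit_of_map_unit (algebraMap A S) ⟨a, ha⟩ hu).exists_left_inv
  exact ⟨b, b.2, congrArg Subtype.val hb⟩

/-- If `m * b ∉ A`, then `B = A[m * b] = A + m B`, and Nakayama's lemma yields `B = A`. -/
theorem mul_mem_of_covBy_of_mem_jacobson (h : A ⋖ B) {m : A} (hm : m ∈ Ideal.jacobson (⊥ : Ideal A))
    {b : S} (hb : b ∈ B) : m * b ∈ A := by
  have : Algebra.IsIntegral A S := .tower_top R
  by_contra hmb
  have hmbB : m * b ∈ B := mul_mem (h.le m.2) hb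
  let D := Algebra.adjoin A {m * b}
  have hDB : ∀ {z}, z ∈ D ↔ z ∈ B := fun {z} => by
    rw [← restrictScalars_adjoin_singleton_eq_of_covBy h hmbB hmb, Subalgebra.mem_restrictScalars]
  have hfg : (Subalgebra.toSubmodule D).FG :=
    (Algebra.IsIntegral.isIntegral _).fg_adjoin_singleton
  have hle : Subalgebra.toSubmodule D ≤ Subalgebra.toSubmodule (⊥ : Subalgebra A S) := by
    refine Submodule.le_of_le_smul_of_le_jacobson_bot hfg le_rfl fun z hz => ?_
    obtain ⟨a, ha, c, hc, rfl⟩ := exists_eq_add_mul_of_covBy h hmbB hmb (hDB.1 hz)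
    rw [mul_assoc]
    exact Submodule.add_mem_sup ((⊥ : Subalgebra A S).algebraMap_mem ⟨a, ha⟩)
      (Submodule.smul_mem_smul hm (hDB.2 (mul_mem hb hc)))
  obtain ⟨a, ha⟩ := Algebra.mem_bot.1 (hle (Algebra.self_mem_adjoin_singleton A _))
  exact hmb (ha ▸ a.2)

end Integral

section Local

open IsLocalRing

variable [IsLocalRing S] [Algebra.IsIntegral R S] {A B : Subalgebra R S} {b x y : S}

theorem mul_mem_of_covBy (h : A ⋖ B) {m : S} (hmA : m ∈ A) (hm : m ∈ maximalIdeal S)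
    (hb : b ∈ B) : m * b ∈ A := by
  have : Algebra.IsIntegral A S := .tower_top R
  have : IsLocalRing A := RingHom.domain_isLocalRing (algebraMap A S)
  refine mul_mem_of_covBy_of_mem_jacobson h (m := ⟨m, hmA⟩) ?_ hb
  rw [jacobson_eq_maximalIdeal ⊥ bot_ne_top, mem_maximalIdeal]
  exact map_mem_nonunits_iff (algebraMap A S) _ |>.1 hm

/-- Otherwise `B = A[x ^ 2]`, so `x = a + x ^ 2 * b` and `x * (1 - x * b) = a ∈ M ∩ A`, where
`1 - x * b` is a unit of `B`. -/
theorem sq_mem_of_covBy (h : A ⋖ B) (hxB : x ∈ B) (hxM : x ∈ maximalIdeal S) : x ^ 2 ∈ A := by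
  by_contra hx2
  obtain ⟨a, ha, b, hb, hx⟩ := exists_eq_add_mul_of_covBy h (pow_mem hxB 2) hx2 hxB
  have haM : a ∈ maximalIdeal S := by
    rw [show a = x * (1 - x * b) by linear_combination -hx]
    exact Ideal.mul_mem_right _ _ hxM
  have hu : IsUnit (1 - x * b) :=
    (isUnit_or_isUnit_one_sub_self (x * b)).resolve_left (Ideal.mul_mem_right _ _ hxM)
  obtain ⟨c, hc, hc1⟩ := exists_mem_mul_eq_one_of_isUnit
    (sub_mem B.one_mem (mul_mem hxB hb)) hu
  have hxa : x = a * c := by linear_combination -x * hc1 + c * hx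
  exact hx2 (pow_mem (hxa ▸ mul_mem_of_covBy h ha haM hc) 2)

theorem cube_mem_of_covBy (h : A ⋖ B) (hxB : x ∈ B) (hxM : x ∈ maximalIdeal S) : x ^ 3 ∈ A := by
  rw [pow_succ]
  exact mul_mem_of_covBy h (sq_mem_of_covBy h hxB hxM)
    (Ideal.pow_mem_of_mem _ hxM 2 two_pos) hxB

theorem exists_eq_add_mul_of_covBy_of_mem_maximalIdeal (h : A ⋖ B) (hxB : x ∈ B) (hxA : x ∉ A)
    (hxM : x ∈ maximalIdeal S) (hb : b ∈ B) : ∃ a ∈ A, ∃ a' ∈ A, b = a + a' * x :=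
  exists_eq_add_mul_of_covBy_of_sq_mem h hxB hxA (sq_mem_of_covBy h hxB hxM) hb

/-! ### Coverings and the subalgebra `R + M` -/

theorem sup_baseAddIdeal_eq_of_covBy (h : A ⋖ B) (hxB : x ∈ B) (hxA : x ∉ A)
    (hxM : x ∈ maximalIdeal S) :
    A ⊔ baseAddIdeal R (maximalIdeal S) = B ⊔ baseAddIdeal R (maximalIdeal S) := by
  refine le_antisymm (sup_le_sup_right h.le _) (sup_le (fun b hb => ?_) le_sup_right)
  obtain ⟨a, ha, a', -, rfl⟩ :=
    exists_eq_add_mul_of_covBy_of_mem_maximalIdeal h hxB hxA hxM hb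
  exact mem_sup_baseAddIdeal.2 ⟨a, ha, by simpa using Ideal.mul_mem_left _ a' hxM⟩

/-- If `A ∩ T ⋖ B ∩ T`, where `T = R + M`, then `B ∩ T = D + D x` with `D = A ∩ T`. For `u ∈ A`,
writing `u * x = d + d' * x` shows that `u - d'` is not a unit, so that `u ∈ d' + M ⊆ T`. -/
theorem le_baseAddIdeal_of_inf_covBy (hAB : A ≤ B) (hxB : x ∈ B) (hxA : x ∉ A)
    (hxM : x ∈ maximalIdeal S)
    (h : A ⊓ baseAddIdeal R (maximalIdeal S) ⋖ B ⊓ baseAddIdeal R (maximalIdeal S)) :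
    A ≤ baseAddIdeal R (maximalIdeal S) := by
  intro u hu
  have hxBT : x ∈ B ⊓ baseAddIdeal R (maximalIdeal S) := ⟨hxB, mem_baseAddIdeal_of_mem hxM⟩
  have huxBT : u * x ∈ B ⊓ baseAddIdeal R (maximalIdeal S) :=
    ⟨mul_mem (hAB hu) hxB, mem_baseAddIdeal_of_mem (Ideal.mul_mem_left _ _ hxM)⟩
  obtain ⟨d, hd, d', hd', hux⟩ := exists_eq_add_mul_of_covBy_of_mem_maximalIdeal h hxBT
    (fun hx => hxA hx.1) hxM huxBT
  have hM : u - d' ∈ maximalIdeal S := by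
    by_contra hunit
    obtain ⟨c, hc, hc1⟩ := exists_mem_mul_eq_one_of_isUnit (sub_mem hu hd'.1)
      (notMem_maximalIdeal.1 hunit)
    have hx : x = c * d := by linear_combination -x * hc1 + c * hux
    exact hxA (hx ▸ mul_mem hc hd.1)
  simpa using add_mem (mem_baseAddIdeal_of_mem hM) hd'.2

variable (R S) in
theorem separatesCovBy_baseAddIdeal_maximalIdeal :
    SeparatesCovBy (baseAddIdeal R (maximalIdeal S)) := by
  intro A B h
  by_cases hI : ∀ b ∈ B, b ∈ maximalIdeal S → b ∈ A
  · exact .inl ⟨inf_baseAddIdeal_eq_of_forall_mem h.le hI,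
      sup_baseAddIdeal_covBy_of_forall_mem h hI⟩
  · push Not at hI
    obtain ⟨x, hxB, hxM, hxA⟩ := hI
    refine .inr ⟨sup_baseAddIdeal_eq_of_covBy h hxB hxA hxM,
      (inf_le_inf_right _ h.le).lt_of_not_ge fun hle => hxA ?_,
      le_baseAddIdeal_of_inf_covBy h.le hxB hxA hxM⟩
    exact (hle ⟨hxB, mem_baseAddIdeal_of_mem hxM⟩).1

/-- Modulo `R` we may move `y` into `M`; then `B = A + A y`, and `A y ⊆ R y + M y` with
`(M ∩ A) y ⊆ A`. -/
theorem exists_eq_add_smul_of_covBy (h : A ⋖ B) (hB : B ≤ baseAddIdeal R (maximalIdeal S))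
    (hyB : y ∈ B) (hyA : y ∉ A) (hb : b ∈ B) : ∃ a ∈ A, ∃ r : R, b = a + r • y := by
  obtain ⟨r₀, hr₀⟩ := mem_baseAddIdeal.1 (hB hyB)
  let x := y - algebraMap R S r₀
  have hxB : x ∈ B := sub_mem hyB (B.algebraMap_mem r₀)
  have hxA : x ∉ A := fun hx => hyA (by simpa [x] using add_mem hx (A.algebraMap_mem r₀))
  obtain ⟨a, ha, a', ha', rfl⟩ :=
    exists_eq_add_mul_of_covBy_of_mem_maximalIdeal h hxB hxA hr₀ hb
  obtain ⟨r, hr⟩ := mem_baseAddIdeal.1 (hB (h.le ha'))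
  have hmx : (a' - algebraMap R S r) * x ∈ A :=
    mul_mem_of_covBy h (sub_mem ha' (A.algebraMap_mem r)) hr hxB
  refine ⟨a + (a' - algebraMap R S r) * x - algebraMap R S (r * r₀),
    sub_mem (add_mem ha hmx) (A.algebraMap_mem _), r, ?_⟩
  rw [Algebra.smul_def, map_mul]
  ring

theorem toSubmodule_covBy_of_covBy (h : A ⋖ B) (hB : B ≤ baseAddIdeal R (maximalIdeal S)) :
    Subalgebra.toSubmodule A ⋖ Subalgebra.toSubmodule B := by
  refine ⟨Subalgebra.toSubmodule.lt_iff_lt.2 h.lt, fun N hAN hNB => hNB.not_ge fun b hb => ?_⟩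
  obtain ⟨y, hyN, hyA⟩ := SetLike.exists_of_lt hAN
  obtain ⟨a, ha, r, rfl⟩ := exists_eq_add_smul_of_covBy h hB (hNB.le hyN) hyA hb
  exact N.add_mem (hAN.le ha) (N.smul_mem r hyN)

theorem isCatenarianFromTo_baseAddIdeal_maximalIdeal (A : Subalgebra R S) :
    IsCatenarianFromTo A (baseAddIdeal R (maximalIdeal S)) :=
  (isCatenarianFromTo_of_isModularLattice _ _).of_map fun _ _ hB h =>
    toSubmodule_covBy_of_covBy h hB

end Local

/-! ### The t-closure -/

section TClosure

open IsLocalRing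

theorem ResidualExtIsIso.exists_map_mul_sub_map_mem {A B : Type*} [CommRing A] [CommRing B]
    {f : A →+* B} {Q : Ideal B} [Q.IsPrime] (h : ResidualExtIsIso f Q) (b : B) :
    ∃ r s : A, f s ∉ Q ∧ f s * b - f r ∈ Q := by
  obtain ⟨z, hz⟩ := h.2 (algebraMap B Q.ResidueField b)
  obtain ⟨r, s, hs, rfl⟩ := IsFractionRing.div_surjective (A ⧸ Q.comap f) z
  obtain ⟨r, rfl⟩ := Ideal.Quotient.mk_surjective r
  obtain ⟨s, rfl⟩ := Ideal.Quotient.mk_surjective s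
  have hsQ : f s ∉ Q := fun hfs =>
    nonZeroDivisors.ne_zero hs (Ideal.Quotient.eq_zero_iff_mem.2 (Ideal.mem_comap.2 hfs))
  refine ⟨r, s, hsQ, ?_⟩
  rw [← Ideal.algebraMap_residueField_eq_zero] at hsQ ⊢
  change Ideal.ResidueField.map (Q.comap f) Q f rfl _ = _ at hz
  rw [Ideal.algebraMap_quotient_residueField_mk, Ideal.algebraMap_quotient_residueField_mk,
    map_div₀, Ideal.ResidueField.map_algebraMap, Ideal.ResidueField.map_algebraMap,
    div_eq_iff hsQ] at hz
  rw [map_sub, map_mul, hz, mul_comm, sub_self]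

variable [IsLocalRing S] [Algebra.IsIntegral R S] {T : Subalgebra R S}

theorem IsInfraIntegral.le_baseAddIdeal_maximalIdeal (hT : IsInfraIntegral R T) :
    T ≤ baseAddIdeal R (maximalIdeal S) := by
  intro t ht
  obtain ⟨r, s, hs, hrs⟩ := (hT.2 ((maximalIdeal S).comap (algebraMap T S))
    (Ideal.comap_isPrime _ _)).exists_map_mul_sub_map_mem ⟨t, ht⟩
  obtain ⟨c, hc, hc1⟩ := exists_mem_mul_eq_one_of_isUnit
    ((⊥ : Subalgebra R S).algebraMap_mem s) (notMem_maximalIdeal.1 hs)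
  obtain ⟨c, rfl⟩ := Algebra.mem_bot.1 hc
  have hM : algebraMap R S s * t - algebraMap R S r ∈ maximalIdeal S := hrs
  refine mem_baseAddIdeal.2 ⟨c * r, ?_⟩
  rw [map_mul, show t - algebraMap R S c * algebraMap R S r =
    algebraMap R S c * (algebraMap R S s * t - algebraMap R S r) by linear_combination -t * hc1]
  exact Ideal.mul_mem_left _ _ hM

theorem IsTClosedIn.mem_of_mem_maximalIdeal [WellFoundedLT (Subalgebra R S)]
    [WellFoundedGT (Subalgebra R S)] (hT : IsTClosedIn T) {U : Subalgebra R S} (hTU : T ≤ U) {x : S}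
    (hxU : x ∈ U) (hxM : x ∈ maximalIdeal S) : x ∈ T := by
  induction U using WellFoundedLT.induction generalizing x with
  | ind U ih =>
    rcases hTU.eq_or_lt with rfl | hlt
    · exact hxU
    · obtain ⟨A, hTA, hAU⟩ := exists_le_covBy_of_lt hlt
      have hx2 : x ^ 2 ∈ T := ih A hAU.lt hTA (sq_mem_of_covBy hAU hxU hxM)
        (Ideal.pow_mem_of_mem _ hxM 2 (by norm_num))
      have hx3 : x ^ 3 ∈ T := ih A hAU.lt hTA (cube_mem_of_covBy hAU hxU hxM)
        (Ideal.pow_mem_of_mem _ hxM 3 (by norm_num))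
      exact hT x 0 T.zero_mem (by simpa using hx2) (by simpa using hx3)

theorem IsTClosure.eq_baseAddIdeal_maximalIdeal [WellFoundedLT (Subalgebra R S)]
    [WellFoundedGT (Subalgebra R S)] (hT : IsTClosure T) :
    T = baseAddIdeal R (maximalIdeal S) := by
  refine le_antisymm hT.1.le_baseAddIdeal_maximalIdeal fun s hs => ?_
  obtain ⟨r, hr⟩ := mem_baseAddIdeal.1 hs
  have hsr := hT.2.mem_of_mem_maximalIdeal le_top Algebra.mem_top hr
  simpa using add_mem hsr (T.algebraMap_mem r)

end TClosure

end Subalgebra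

/-- Let `R ⊆ S` be an integral FCP extension with `S` local
(`R` unbranched in `S`) and t-closure `T`. Then `R ⊆ S` is catenarian iff
`[R,S] = [R,T] ∪ [T,S]` and `T ⊆ S` is catenarian. -/
theorem stmt_17 {R S : Type*} [CommRing R] [CommRing S] [Algebra R S]
    [IsLocalRing S]
    (hinj : Function.Injective (algebraMap R S)) (hFCP : IsFCPExt R S)
    (hint : Algebra.IsIntegral R S)
    (T : Subalgebra R S) (hT : IsTClosure T) :
    IsCatenarianExt R S ↔
      (∀ U : Subalgebra R S, U ≤ T ∨ T ≤ U) ∧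
        IsCatenarianFromTo T (⊤ : Subalgebra R S) := by
  have : WellFoundedLT (Subalgebra R S) := wellFoundedLT_of_forall_isChain_finite hFCP
  have : WellFoundedGT (Subalgebra R S) := wellFoundedGT_of_forall_isChain_finite hFCP
  obtain rfl := hT.eq_baseAddIdeal_maximalIdeal
  constructor
  · intro hcat
    exact ⟨fun U => (separatesCovBy_baseAddIdeal_maximalIdeal R S).le_or_ge_of_isCatenarianFromTo
      hcat bot_le le_top bot_le le_top, hcat.of_le_left bot_le⟩
  · rintro ⟨hcomp, hcat⟩
    exact (isCatenarianFromTo_baseAddIdeal_maximalIdeal ⊥).trans hcat hcomp bot_le le_top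
end
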